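/- Let ε > 0 and let f = id ∗ g be the Dirichlet convolution of the identity with an arithmetic function g satisfying g(n) = O_ε(n^ε) for all n ≥ 1. Then ∑_{n ≤ x} f(⌊x/n⌋)/⌊x/n⌋ = x · ∑_{m ≥ 1} f(m)/(m²(m+1)) + O(x^{1/3 + ε}) as x → ∞. -/

import Mathlib

open Filter Finset

/-- The sawtooth function `⌊w⌋ - w + 1/2`. -/
noncomputable def sawtooth (w : ℝ) : ℝ := (⌊w⌋ : ℝ) - w + 1 / 2

lemma abs_sawtooth_le (w : ℝ) : |sawtooth w| ≤ 1 := by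
  unfold sawtooth
  rw [abs_le]
  constructor <;> linarith [Int.floor_le w, Int.lt_floor_add_one w]

/-- An arithmetic progression of length `q` with step coprime to `q` runs through all residues. -/
lemma sum_emod_of_isCoprime {q : ℕ} (hq : 0 < q) {a : ℤ} (b : ℤ) (h : IsCoprime a (q : ℤ)) :
    ∑ u ∈ range q, (b + a * u) % (q : ℤ) = ∑ r ∈ range q, (r : ℤ) := by
  have hq' : (0 : ℤ) < q := by exact_mod_cast hq
  have hinj : Set.InjOn (fun u : ℕ => ((b + a * u) % (q : ℤ)).toNat) (range q) := by
    intro u hu v hv huv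
    simp only [coe_range, Set.mem_Iio] at hu hv
    have h1 := Int.emod_nonneg (b + a * u) hq'.ne'
    have h2 := Int.emod_nonneg (b + a * v) hq'.ne'
    have h3 : (b + a * u) % (q : ℤ) = (b + a * v) % (q : ℤ) := by
      simp only at huv; omega
    have h4 : (q : ℤ) ∣ a * ((v : ℤ) - u) := by
      have := Int.ModEq.dvd h3
      convert this using 1; ring
    have h5 : (q : ℤ) ∣ (v : ℤ) - u := h.symm.dvd_of_dvd_mul_left h4
    have h6 : (v : ℤ) - u = 0 := by
      apply Int.eq_zero_of_abs_lt_dvd h5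
      rw [abs_lt]; constructor <;> omega
    omega
  have himg : (range q).image (fun u : ℕ => ((b + a * u) % (q : ℤ)).toNat) = range q := by
    apply Finset.eq_of_subset_of_card_le
    · intro r hr
      obtain ⟨u, -, rfl⟩ := Finset.mem_image.1 hr
      have h1 := Int.emod_lt_of_pos (b + a * u) hq'
      have h2 := Int.emod_nonneg (b + a * u) hq'.ne'
      rw [mem_range]; omega
    · rw [Finset.card_image_of_injOn hinj]
  have hr : ∑ r ∈ range q, (r : ℤ) =
      ∑ r ∈ (range q).image (fun u : ℕ => ((b + a * u) % (q : ℤ)).toNat), (r : ℤ) := by rw [himg]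
  rw [hr, Finset.sum_image hinj]
  refine Finset.sum_congr rfl fun u _ => ?_
  rw [Int.toNat_of_nonneg (Int.emod_nonneg _ hq'.ne')]

lemma sum_ediv_of_isCoprime {q : ℕ} (hq : 0 < q) {a : ℤ} (b : ℤ) (h : IsCoprime a (q : ℤ)) :
    ∑ u ∈ range q, (((b + a * u) / (q : ℤ) : ℤ) : ℝ) =
      ∑ u ∈ range q, ((b : ℝ) + a * u) / q - ((q : ℝ) - 1) / 2 := by
  have hq' : (q : ℝ) ≠ 0 := by positivity
  have h1 : ∀ u : ℕ, (((b + a * u) / (q : ℤ) : ℤ) : ℝ) =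
      ((b : ℝ) + a * u) / q - (((b + a * u) % (q : ℤ) : ℤ) : ℝ) / q := by
    intro u
    have := Int.emod_add_mul_ediv (b + a * u) q
    have h2 : (((b + a * u) % (q : ℤ) : ℤ) : ℝ) + q * (((b + a * u) / (q : ℤ) : ℤ) : ℝ) =
      (b : ℝ) + a * u := by exact_mod_cast this
    rw [← h2]; field_simp; ring
  simp_rw [h1]
  rw [Finset.sum_sub_distrib, ← Finset.sum_div _ (fun u : ℕ => (((b + a * u) % (q : ℤ) : ℤ) : ℝ)),
    ← Int.cast_sum, sum_emod_of_isCoprime hq b h]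
  have h3 : ((∑ r ∈ range q, (r : ℤ) : ℤ) : ℝ) = q * (q - 1) / 2 := by
    push_cast
    have : ∀ n : ℕ, ∑ r ∈ range n, (r : ℝ) = n * (n - 1) / 2 := by
      intro n
      induction n with
      | zero => simp
      | succ k ih => rw [Finset.sum_range_succ, ih]; push_cast; ring
    exact this q
  rw [h3]; field_simp

/-- Over a full period of a rational slope, the sawtooth function almost cancels. -/
lemma abs_sum_sawtooth_le {q : ℕ} (hq : 0 < q) {a : ℤ} (h : IsCoprime a (q : ℤ)) (c : ℝ)
    (w : ℕ → ℝ) (hw : ∀ u < q, |w u - (c + a * u / q)| ≤ 2 / q) :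
    |∑ u ∈ range q, sawtooth (w u)| ≤ 7 := by
  have hq' : (0 : ℝ) < q := by positivity
  set b : ℤ := ⌊q * c⌋ with hb
  have hb1 := Int.floor_le (q * c)
  have hb2 := Int.lt_floor_add_one (q * c)
  rw [← hb] at hb1 hb2
  have hlo : ∀ u < q, ((b : ℝ) + a * u - 3) / q ≤ w u := by
    intro u hu
    have h1 := (abs_le.1 (hw u hu)).1
    have h2 : ((b : ℝ) + a * u - 3) / q ≤ c + a * u / q - 2 / q := by
      have : c + a * u / q - 2 / q = (q * c + a * u - 2) / q := by field_simp
      rw [this]; gcongr ?_ / _; linarith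
    linarith
  have hhi : ∀ u < q, w u ≤ ((b : ℝ) + a * u + 3) / q := by
    intro u hu
    have h1 := (abs_le.1 (hw u hu)).2
    have h2 : c + a * u / q + 2 / q ≤ ((b : ℝ) + a * u + 3) / q := by
      have : c + a * u / q + 2 / q = (q * c + a * u + 2) / q := by field_simp
      rw [this]; gcongr ?_ / _; linarith
    linarith
  have hsum : ∀ k : ℝ, ∑ u ∈ range q, ((b : ℝ) + a * u + k) / q =
      ∑ u ∈ range q, ((b : ℝ) + a * u) / q + k := by
    intro k
    simp_rw [add_div _ k]
    rw [Finset.sum_add_distrib]; simp; field_simp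
  have hfl : ∀ z : ℤ, ⌊(z : ℝ) / q⌋ = z / (q : ℤ) := fun z => by
    rw [Int.floor_div_natCast, Int.floor_intCast]
  have hup : ∑ u ∈ range q, ((⌊w u⌋ : ℤ) : ℝ) ≤
      ∑ u ∈ range q, ((b : ℝ) + a * u) / q + 3 - ((q : ℝ) - 1) / 2 := by
    have := sum_ediv_of_isCoprime hq (b + 3) h
    have h2 : ∑ u ∈ range q, (((b + 3 : ℤ) : ℝ) + a * u) / q =
      ∑ u ∈ range q, ((b : ℝ) + a * u) / q + 3 := by
      rw [← hsum]; refine Finset.sum_congr rfl fun u _ => ?_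
      push_cast; ring
    rw [← h2, ← this]
    refine Finset.sum_le_sum fun u hu => ?_
    have := hhi u (mem_range.1 hu)
    have h3 := Int.floor_le_floor this
    have h4 := hfl (b + 3 + a * u)
    push_cast at h4
    rw [show (b : ℝ) + a * u + 3 = b + 3 + a * u by ring, h4] at h3
    exact_mod_cast h3
  have hdn : ∑ u ∈ range q, ((b : ℝ) + a * u) / q - 3 - ((q : ℝ) - 1) / 2 ≤
      ∑ u ∈ range q, ((⌊w u⌋ : ℤ) : ℝ) := by
    have := sum_ediv_of_isCoprime hq (b - 3) h
    have h2 : ∑ u ∈ range q, (((b - 3 : ℤ) : ℝ) + a * u) / q =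
      ∑ u ∈ range q, ((b : ℝ) + a * u) / q - 3 := by
      rw [sub_eq_add_neg _ (3 : ℝ), ← hsum]; refine Finset.sum_congr rfl fun u _ => ?_
      push_cast; ring
    rw [← h2, ← this]
    refine Finset.sum_le_sum fun u hu => ?_
    have := hlo u (mem_range.1 hu)
    have h3 := Int.floor_le_floor this
    have h4 := hfl (b - 3 + a * u)
    push_cast at h4
    rw [show (b : ℝ) + a * u - 3 = b - 3 + a * u by ring, h4] at h3
    exact_mod_cast h3
  have hwu : ∑ u ∈ range q, w u ≤ ∑ u ∈ range q, ((b : ℝ) + a * u) / q + 3 := by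
    rw [← hsum]; exact Finset.sum_le_sum fun u hu => hhi u (mem_range.1 hu)
  have hwd : ∑ u ∈ range q, ((b : ℝ) + a * u) / q + (-3) ≤ ∑ u ∈ range q, w u := by
    rw [← hsum]; exact Finset.sum_le_sum fun u hu => by
      have := hlo u (mem_range.1 hu); rwa [← sub_eq_add_neg]
  have htot : ∑ u ∈ range q, sawtooth (w u) =
      ∑ u ∈ range q, ((⌊w u⌋ : ℤ) : ℝ) - ∑ u ∈ range q, w u + q / 2 := by
    unfold sawtooth
    rw [Finset.sum_add_distrib, Finset.sum_sub_distrib]; simp; ring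
  rw [htot, abs_le]
  constructor <;> linarith

/-- A set of naturals with gaps at least `q` and diameter at most `R` has at most `R / q + 1`
elements. -/
lemma card_le_of_gap (B : Finset ℕ) {q : ℕ} (hq : 0 < q) {R : ℝ} (hR : 0 ≤ R)
    (hgap : ∀ s ∈ B, ∀ t ∈ B, s < t → s + q ≤ t)
    (hdiam : ∀ s ∈ B, ∀ t ∈ B, s < t → (t : ℝ) - s ≤ R) : (B.card : ℝ) ≤ R / q + 1 := by
  have hq' : (0 : ℝ) < q := by positivity
  rcases B.eq_empty_or_nonempty with rfl | hB
  · simp; positivity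
  set m := B.min' hB
  have hm : m ∈ B := B.min'_mem hB
  have hcard : B.card ≤ (range (⌊R / q⌋₊ + 1)).card := by
    apply Finset.card_le_card_of_injOn (fun s => (s - m) / q)
    · intro s hs
      have hms : m ≤ s := B.min'_le s hs
      simp only [coe_range, Set.mem_Iio]
      rw [Nat.lt_succ_iff]
      apply Nat.le_floor
      refine Nat.cast_div_le.trans ?_
      gcongr
      rw [Nat.cast_sub hms]
      rcases hms.eq_or_lt with h | h
      · rw [h]; simpa using hR
      · exact hdiam m hm s hs h
    · have key : ∀ s ∈ B, ∀ t ∈ B, s < t → (s - m) / q < (t - m) / q := by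
        intro s hs t ht hst
        have h1 := hgap s hs t ht hst
        have hms : m ≤ s := B.min'_le s hs
        have : (s - m) + q ≤ t - m := by omega
        calc (s - m) / q < (s - m) / q + 1 := Nat.lt_succ_self _
          _ = ((s - m) + q) / q := by rw [Nat.add_div_right _ hq]
          _ ≤ (t - m) / q := Nat.div_le_div_right this
      intro s hs t ht hst
      rcases lt_trichotomy s t with h | h | h
      · exact absurd hst (key s hs t ht h).ne
      · exact h
      · exact absurd hst (key t ht s hs h).ne'
  rw [card_range] at hcard
  calc (B.card : ℝ) ≤ ((⌊R / q⌋₊ + 1 : ℕ) : ℝ) := by exact_mod_cast hcard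
    _ ≤ R / q + 1 := by push_cast; gcongr; exact Nat.floor_le (by positivity)

/-- Cut `[t, M)` greedily into blocks `[s, s + p s)` on each of which the sum of `φ` is small. -/
lemma exists_greedy_blocks (φ : ℕ → ℝ) (hφ : ∀ n, |φ n| ≤ 1) (p : ℕ → ℕ) (T M K : ℕ)
    (t : ℕ) (hp : ∀ s, t ≤ s → 0 < p s ∧ p s ≤ T)
    (hblock : ∀ s, t ≤ s → |∑ u ∈ range (p s), φ (s + u)| ≤ K) :
    ∃ B ⊆ Ico t M, (∀ s ∈ B, ∀ s' ∈ B, s < s' → s + p s ≤ s') ∧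
      |∑ n ∈ Ico t M, φ n| ≤ K * B.card + T := by
  induction hk : M - t using Nat.strong_induction_on generalizing t with
  | _ k ih =>
    obtain ⟨hp0, hpT⟩ := hp t le_rfl
    by_cases hM : M < t + p t
    · refine ⟨∅, by simp, by simp, ?_⟩
      simp only [card_empty, Nat.cast_zero, mul_zero, zero_add]
      calc |∑ n ∈ Ico t M, φ n| ≤ ∑ n ∈ Ico t M, |φ n| := abs_sum_le_sum_abs _ _
        _ ≤ ∑ n ∈ Ico t M, (1 : ℝ) := Finset.sum_le_sum fun n _ => hφ n
        _ = ((M - t : ℕ) : ℝ) := by simp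
        _ ≤ T := by exact_mod_cast (by omega)
    · push Not at hM
      obtain ⟨B, hB, hgap, hsum⟩ := ih (M - (t + p t)) (by omega) (t + p t)
        (fun s hs => hp s (by omega)) (fun s hs => hblock s (by omega)) rfl
      have htB : t ∉ B := fun h => by
        have := (Finset.mem_Ico.1 (hB h)).1; omega
      refine ⟨insert t B, ?_, ?_, ?_⟩
      · intro s hs
        rcases Finset.mem_insert.1 hs with rfl | hs
        · simp; omega
        · have := Finset.mem_Ico.1 (hB hs)
          simp; omega
      · intro s hs s' hs' hlt
        rcases Finset.mem_insert.1 hs with rfl | hs1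
        · rcases Finset.mem_insert.1 hs' with rfl | hs1'
          · exact absurd hlt (lt_irrefl _)
          · exact (Finset.mem_Ico.1 (hB hs1')).1
        · rcases Finset.mem_insert.1 hs' with rfl | hs1'
          · have := (Finset.mem_Ico.1 (hB hs1)).1
            omega
          · exact hgap s hs1 s' hs1' hlt
      · rw [Finset.card_insert_of_notMem htB,
          ← Finset.sum_Ico_consecutive φ (Nat.le_add_right t (p t)) hM]
        have h1 : ∑ n ∈ Ico t (t + p t), φ n = ∑ u ∈ range (p t), φ (t + u) := by
          rw [Finset.sum_Ico_eq_sum_range]; simp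
        rw [h1]
        push_cast
        have := abs_add_le (∑ u ∈ range (p t), φ (t + u)) (∑ n ∈ Ico (t + p t) M, φ n)
        linarith [hblock t le_rfl]

lemma abs_hyperbola_sub_tangent_le {Y S q u : ℝ} {T : ℝ} {N : ℝ} {v r : ℝ} (hY : 0 < Y) (hN : 0 < N)
    (hNS : N ≤ S) (hq : 0 < q) (hqT : q ≤ T) (hu : 0 ≤ u) (huq : u ≤ q) (hYT : Y * T ≤ N)
    (hv : v = Y ^ 3 / S ^ 2) (hr : |v - r| ≤ 1 / ((T + 1) * q)) :
    |Y ^ 3 / (S + u) - (Y ^ 3 / S + (-r) * u)| ≤ 2 / q := by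
  have hS : 0 < S := hN.trans_le hNS
  have hT : 0 < T := hq.trans_le hqT
  have h1 : Y ^ 3 / (S + u) - (Y ^ 3 / S + (-r) * u) =
      -((v - r) * u) + Y ^ 3 * u ^ 2 / (S ^ 2 * (S + u)) := by
    rw [hv]; field_simp; ring
  have h2 : |(v - r) * u| ≤ 1 / q := by
    rw [abs_mul, abs_of_nonneg hu]
    calc |v - r| * u ≤ 1 / ((T + 1) * q) * q := by gcongr
      _ = 1 / (T + 1) := by field_simp
      _ ≤ 1 / q := by gcongr; linarith
  have h3 : Y ^ 3 * u ^ 2 / (S ^ 2 * (S + u)) ≤ 1 / q := by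
    rw [div_le_div_iff₀ (by positivity) hq]
    calc Y ^ 3 * u ^ 2 * q ≤ Y ^ 3 * T ^ 2 * T := by gcongr; exact huq.trans hqT
      _ = (Y * T) ^ 3 := by ring
      _ ≤ S ^ 3 := by gcongr; exact hYT.trans hNS
      _ ≤ 1 * (S ^ 2 * (S + u)) := by nlinarith [mul_nonneg (sq_nonneg S) hu]
  have h4 : 0 ≤ Y ^ 3 * u ^ 2 / (S ^ 2 * (S + u)) := by positivity
  have h5 : 2 / q = 1 / q + 1 / q := by ring
  rw [h1, h5, abs_le]
  have := abs_le.1 h2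
  constructor <;> linarith

/-- Second-difference spacing: `y / S ^ 2` at two points of `[N, 3 * N]` differ by at least a
multiple of the distance between the points. -/
lemma sub_le_of_slopes_close {Y S S' N T q v v' r : ℝ} (hY : 0 < Y) (hN : 0 < N) (hNS : N ≤ S)
    (hSS : S < S') (hS' : S' ≤ 3 * N) (hq : 0 < q) (hT : 0 < T) (hNT : N ≤ Y * (T + 1))
    (hv : v = Y ^ 3 / S ^ 2) (hv' : v' = Y ^ 3 / S' ^ 2)
    (hr : |v - r| ≤ 1 / ((T + 1) * q)) (hr' : |v' - r| ≤ 1 / ((T + 1) * q)) :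
    S' - S ≤ 54 * (T + 1) ^ 2 / q := by
  have hS : 0 < S := hN.trans_le hNS
  have hS'0 : 0 < S' := hS.trans hSS
  have h1 : v - v' ≤ 2 / ((T + 1) * q) := by
    have e : 2 / ((T + 1) * q) = 1 / ((T + 1) * q) + 1 / ((T + 1) * q) := by ring
    rw [e]; linarith [(abs_le.1 hr).2, (abs_le.1 hr').1]
  have h2 : (S' - S) * (Y ^ 3 / (27 * N ^ 3)) ≤ v - v' := by
    have e : v - v' = (S' - S) * (Y ^ 3 * (S + S') / (S ^ 2 * S' ^ 2)) := by
      rw [hv, hv']; field_simp; ring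
    rw [e]
    refine mul_le_mul_of_nonneg_left ?_ (by linarith)
    rw [div_le_div_iff₀ (by positivity) (by positivity)]
    have h27 : S * S' ^ 2 ≤ 27 * N ^ 3 := by
      calc S * S' ^ 2 ≤ (3 * N) * (3 * N) ^ 2 := by gcongr; linarith
        _ = 27 * N ^ 3 := by ring
    calc Y ^ 3 * (S ^ 2 * S' ^ 2) = Y ^ 3 * S * (S * S' ^ 2) := by ring
      _ ≤ Y ^ 3 * (S + S') * (27 * N ^ 3) := by gcongr; linarith
  have h3 : (S' - S) * (Y ^ 3 / (27 * N ^ 3)) ≤ 2 / ((T + 1) * q) := h2.trans h1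
  have hN3 : N ^ 3 ≤ Y ^ 3 * (T + 1) ^ 3 := by
    rw [← mul_pow]; gcongr
  have h4 : S' - S ≤ 2 / ((T + 1) * q) * (27 * N ^ 3 / Y ^ 3) := by
    have : S' - S = (S' - S) * (Y ^ 3 / (27 * N ^ 3)) * (27 * N ^ 3 / Y ^ 3) := by field_simp
    rw [this]; gcongr
  calc S' - S ≤ 2 / ((T + 1) * q) * (27 * N ^ 3 / Y ^ 3) := h4
    _ ≤ 2 / ((T + 1) * q) * (27 * (Y ^ 3 * (T + 1) ^ 3) / Y ^ 3) := by gcongr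
    _ = 54 * (T + 1) ^ 2 / q := by field_simp; ring

/-- Count of blocks whose slope has a given denominator `q`. -/
lemma card_filter_den_le {Y α : ℝ} (hY : 0 < Y) (hα : 0 ≤ α) (hα1 : α ≤ 1) {N T : ℕ} (hN : 0 < N)
    (hT : 0 < T) (hYT : Y * T ≤ N) (hNT : N ≤ Y * (T + 1)) (hNY : (N : ℝ) ^ 2 ≤ Y ^ 3)
    (r : ℕ → ℚ) (hr : ∀ s : ℕ, |Y ^ 3 / (s + α) ^ 2 - r s| ≤ 1 / ((T + 1) * (r s).den))
    (B : Finset ℕ) (hB : ∀ s ∈ B, N ≤ s ∧ s ≤ 2 * N)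
    (hgap : ∀ s ∈ B, ∀ s' ∈ B, s < s' → s + (r s).den ≤ s') {q : ℕ} (hq : 0 < q) (hqT : q ≤ T) :
    ((B.filter fun s => (r s).den = q).card : ℝ) ≤ 651 * Y / q := by
  have hN' : (0 : ℝ) < N := by positivity
  have hq' : (0 : ℝ) < q := by positivity
  have hq1 : (1 : ℝ) ≤ q := by exact_mod_cast hq
  have hT' : (0 : ℝ) < T := by positivity
  have hT1 : (1 : ℝ) ≤ T := by exact_mod_cast hT
  have hqT' : (q : ℝ) ≤ T := by exact_mod_cast hqT
  set D : ℝ := Y ^ 3 / N ^ 2 with hD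
  have hD1 : 1 ≤ D := by rw [hD, le_div_iff₀ (by positivity)]; linarith
  have hTD : (T : ℝ) ^ 2 * D ≤ Y := by
    rw [hD, ← mul_div_assoc, div_le_iff₀ (by positivity)]
    calc (T : ℝ) ^ 2 * Y ^ 3 = Y * (Y * T) ^ 2 := by ring
      _ ≤ Y * N ^ 2 := by gcongr
  have hmaps : ∀ s ∈ B.filter (fun s => (r s).den = q), (r s).num ∈ Icc (0 : ℤ) ⌊q * D + 1⌋ := by
    intro s hs
    obtain ⟨hsB, hsq⟩ := Finset.mem_filter.1 hs
    have hNs : (N : ℝ) ≤ s + α := by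
      have : (N : ℝ) ≤ s := by exact_mod_cast (hB s hsB).1
      linarith
    have hrs := hr s
    rw [hsq] at hrs
    have hrq : ((r s : ℚ) : ℝ) = (r s).num / q := by rw [Rat.cast_def, hsq]
    have hv0 : 0 < Y ^ 3 / ((s : ℝ) + α) ^ 2 := by
      have : 0 < (s : ℝ) + α := by linarith
      positivity
    have hvD : Y ^ 3 / ((s : ℝ) + α) ^ 2 ≤ D := by rw [hD]; gcongr
    have hle : 1 / (((T : ℝ) + 1) * q) < 1 / q := by
      gcongr
      nlinarith
    have h1 := abs_le.1 hrs
    rw [hrq] at h1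
    have e : (((r s).num : ℝ) / q) * q = (r s).num := by field_simp
    have e1 : (1 : ℝ) / q * q = 1 := by field_simp
    have hlo : (-1 : ℝ) < (r s).num := by
      have : -(1 / (q : ℝ)) < (r s).num / q := by linarith
      have := mul_lt_mul_of_pos_right this hq'
      linarith
    have hhi : ((r s).num : ℝ) ≤ q * D + 1 := by
      have : ((r s).num : ℝ) / q ≤ D + 1 / q := by linarith
      have := mul_le_mul_of_nonneg_right this hq'.le
      linarith
    rw [Finset.mem_Icc]
    constructor
    · have : (-1 : ℤ) < (r s).num := by exact_mod_cast hlo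
      omega
    · exact Int.le_floor.2 hhi
  have hfib : ∀ a ∈ Icc (0 : ℤ) ⌊q * D + 1⌋,
      ((((B.filter (fun s => (r s).den = q)).filter (fun s => (r s).num = a)).card : ℕ) : ℝ) ≤
        217 * T ^ 2 / q ^ 2 := by
    intro a _
    have hc := card_le_of_gap ((B.filter (fun s => (r s).den = q)).filter (fun s => (r s).num = a))
      hq (R := 54 * ((T : ℝ) + 1) ^ 2 / q) (by positivity) ?_ ?_
    · refine hc.trans ?_
      have h1 : 54 * ((T : ℝ) + 1) ^ 2 / q / q ≤ 216 * T ^ 2 / q ^ 2 := by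
        rw [div_div, ← sq]
        refine div_le_div_of_nonneg_right ?_ (by positivity)
        nlinarith
      have h2 : (1 : ℝ) ≤ T ^ 2 / q ^ 2 := by
        rw [le_div_iff₀ (by positivity), one_mul]; gcongr
      calc _ ≤ 216 * (T : ℝ) ^ 2 / q ^ 2 + T ^ 2 / q ^ 2 := add_le_add h1 h2
        _ = _ := by ring
    · intro s hs s' hs' hlt
      simp only [Finset.mem_filter] at hs hs'
      have := hgap s hs.1.1 s' hs'.1.1 hlt
      rwa [hs.1.2] at this
    · intro s hs s' hs' hlt
      simp only [Finset.mem_filter] at hs hs'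
      have hNs : (N : ℝ) ≤ s := by exact_mod_cast (hB s hs.1.1).1
      have hNs' : (s' : ℝ) ≤ 2 * N := by exact_mod_cast (hB s' hs'.1.1).2
      have hN1 : (1 : ℝ) ≤ N := by exact_mod_cast hN
      have hlt' : (s : ℝ) < s' := by exact_mod_cast hlt
      have hrr : r s = r s' := by
        apply Rat.ext
        · rw [hs.2, hs'.2]
        · rw [hs.1.2, hs'.1.2]
      have h1 := hr s
      have h2 := hr s'
      rw [hs.1.2] at h1
      rw [hs'.1.2, ← hrr] at h2
      have := sub_le_of_slopes_close (S := s + α) (S' := s' + α) hY hN' (by linarith)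
        (by linarith) (by linarith) hq' hT' hNT rfl rfl h1 h2
      linarith
  rw [Finset.card_eq_sum_card_fiberwise hmaps]
  push_cast
  refine (Finset.sum_le_sum hfib).trans ?_
  rw [Finset.sum_const, nsmul_eq_mul]
  have hcard : ((Icc (0 : ℤ) ⌊q * D + 1⌋).card : ℝ) ≤ 3 * (q * D) := by
    rw [Int.card_Icc]
    have h0 : (0 : ℤ) ≤ ⌊q * D + 1⌋ := Int.floor_nonneg.2 (by positivity)
    have : ((⌊q * D + 1⌋ + 1 - 0).toNat : ℝ) = ((⌊q * D + 1⌋ + 1 - 0 : ℤ) : ℝ) := by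
      exact_mod_cast Int.toNat_of_nonneg (by omega)
    rw [this]
    push_cast
    have := Int.floor_le (q * D + 1)
    nlinarith
  calc _ ≤ 3 * (q * D) * (217 * T ^ 2 / q ^ 2) := by gcongr
    _ = 651 * (T ^ 2 * D) / q := by field_simp; ring
    _ ≤ 651 * Y / q := by gcongr

/-- The sawtooth sum along a hyperbola over a dyadic interval. -/
lemma abs_sum_Ico_sawtooth_le {Y α : ℝ} (hY : 1 ≤ Y) (hα : 0 ≤ α) (hα1 : α ≤ 1) (β : ℝ)
    {N M : ℕ} (hN : 0 < N) (hM : M ≤ 2 * N) (hNY : (N : ℝ) ^ 2 ≤ Y ^ 3) :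
    |∑ n ∈ Ico N M, sawtooth (Y ^ 3 / (n + α) - β)| ≤ 4558 * Y * (1 + Real.log Y) := by
  have hY0 : 0 < Y := by linarith
  have hlog : 0 ≤ Real.log Y := Real.log_nonneg hY
  have hN' : (0 : ℝ) < N := by positivity
  by_cases hNsmall : (N : ℝ) < Y
  · calc |∑ n ∈ Ico N M, sawtooth (Y ^ 3 / (n + α) - β)|
        ≤ ∑ n ∈ Ico N M, |sawtooth (Y ^ 3 / (n + α) - β)| := abs_sum_le_sum_abs _ _
      _ ≤ ∑ n ∈ Ico N M, (1 : ℝ) := Finset.sum_le_sum fun n _ => abs_sawtooth_le _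
      _ = ((M - N : ℕ) : ℝ) := by simp
      _ ≤ N := by exact_mod_cast (by omega)
      _ ≤ 4558 * Y * (1 + Real.log Y) := by nlinarith [mul_nonneg hY0.le hlog]
  push Not at hNsmall
  set T : ℕ := ⌊N / Y⌋₊ with hTdef
  have hT : 0 < T := Nat.floor_pos.2 (by rwa [le_div_iff₀ hY0, one_mul])
  have hT' : (0 : ℝ) < T := by positivity
  have hT1 : (1 : ℝ) ≤ T := by exact_mod_cast hT
  have hYT : Y * T ≤ N := by
    have := Nat.floor_le (show 0 ≤ N / Y by positivity)
    rw [le_div_iff₀ hY0] at this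
    linarith
  have hNT : (N : ℝ) ≤ Y * (T + 1) := by
    have := Nat.lt_floor_add_one (N / Y)
    rw [div_lt_iff₀ hY0] at this
    linarith
  have hTY : (T : ℝ) ≤ Y := by
    have h1 : Y ^ 2 * (T : ℝ) ^ 2 ≤ Y ^ 2 * Y := by
      calc Y ^ 2 * (T : ℝ) ^ 2 = (Y * T) ^ 2 := by ring
        _ ≤ (N : ℝ) ^ 2 := by gcongr
        _ ≤ Y ^ 2 * Y := by linarith [hNY]
    have h2 := le_of_mul_le_mul_left h1 (by positivity)
    nlinarith
  choose r hr hrT using fun s : ℕ =>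
    Real.exists_rat_abs_sub_le_and_den_le (Y ^ 3 / ((s : ℝ) + α) ^ 2) hT
  obtain ⟨B, hBsub, hgap, hsum⟩ := exists_greedy_blocks
    (fun n => sawtooth (Y ^ 3 / (n + α) - β)) (fun n => abs_sawtooth_le _)
    (fun s => (r s).den) T M 7 N (fun s _ => ⟨(r s).pos, hrT s⟩) (by
      intro s hs
      have hs' : (N : ℝ) ≤ s + α := by
        have : (N : ℝ) ≤ s := by exact_mod_cast hs
        linarith
      have hcop : IsCoprime (-(r s).num) ((r s).den : ℤ) := by
        rw [IsCoprime.neg_left_iff]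
        exact Rat.isCoprime_num_den (r s)
      have hden : (0 : ℝ) < (r s).den := by exact_mod_cast (r s).pos
      have := abs_sum_sawtooth_le (r s).pos hcop (Y ^ 3 / (s + α) - β)
        (fun u => Y ^ 3 / ((s + u : ℕ) + α) - β) (fun u hu => by
          have hdT : ((r s).den : ℝ) ≤ T := by exact_mod_cast hrT s
          have hu' : (u : ℝ) ≤ (r s).den := by exact_mod_cast hu.le
          have h := abs_hyperbola_sub_tangent_le hY0 hN' hs' hden hdT (Nat.cast_nonneg u) hu' hYT rfl (hr s)
          convert h using 2
          rw [Rat.cast_def]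
          push_cast
          rw [show (s : ℝ) + u + α = s + α + u by ring]
          ring)
      exact_mod_cast this)
  have hBmem : ∀ s ∈ B, N ≤ s ∧ s ≤ 2 * N := fun s hs => by
    have := Finset.mem_Ico.1 (hBsub hs)
    omega
  have hcard : (B.card : ℝ) ≤ 651 * Y * (1 + Real.log Y) := by
    have hmaps : ∀ s ∈ B, (r s).den ∈ Icc 1 T := fun s _ =>
      Finset.mem_Icc.2 ⟨(r s).pos, hrT s⟩
    rw [Finset.card_eq_sum_card_fiberwise hmaps]
    push_cast
    calc _ ≤ ∑ q ∈ Icc 1 T, 651 * Y / (q : ℝ) := Finset.sum_le_sum fun q hq =>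
          card_filter_den_le hY0 hα hα1 hN hT hYT hNT hNY r hr B hBmem hgap
            (Finset.mem_Icc.1 hq).1 (Finset.mem_Icc.1 hq).2
      _ = 651 * Y * (harmonic T : ℝ) := by
          rw [harmonic_eq_sum_Icc]
          push_cast
          rw [Finset.mul_sum]
          rfl
      _ ≤ 651 * Y * (1 + Real.log T) := by gcongr; exact harmonic_le_one_add_log T
      _ ≤ 651 * Y * (1 + Real.log Y) := by gcongr
  push_cast at hsum
  nlinarith [mul_nonneg hY0.le hlog]

/-- The sawtooth sum along a hyperbola up to the square root. -/
lemma abs_sum_Ico_one_sawtooth_le {Y α : ℝ} (hY : 1 ≤ Y) (hα : 0 ≤ α) (hα1 : α ≤ 1) (β : ℝ)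
    (k A : ℕ) (hA : A ≤ 2 ^ k) (hAY : ((A - 1 : ℕ) : ℝ) ^ 2 ≤ Y ^ 3) :
    |∑ n ∈ Ico 1 A, sawtooth (Y ^ 3 / (n + α) - β)| ≤ k * (4558 * Y * (1 + Real.log Y)) := by
  have hlog : 0 ≤ Real.log Y := Real.log_nonneg hY
  induction k generalizing A with
  | zero =>
    rw [pow_zero] at hA
    rw [Finset.Ico_eq_empty_of_le hA]
    simp
  | succ k ih =>
    by_cases hA1 : A ≤ 1
    · rw [Finset.Ico_eq_empty_of_le hA1]
      simp; positivity
    set H := (A + 1) / 2 with hH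
    rw [pow_succ] at hA
    have hle : ((H - 1 : ℕ) : ℝ) ≤ ((A - 1 : ℕ) : ℝ) := by exact_mod_cast (by omega)
    have hle' : (H : ℝ) ≤ ((A - 1 : ℕ) : ℝ) := by exact_mod_cast (by omega)
    have h1 := ih H (by omega) ((pow_le_pow_left₀ (Nat.cast_nonneg _) hle 2).trans hAY)
    have h2 := abs_sum_Ico_sawtooth_le hY hα hα1 β (N := H) (M := A) (by omega) (by omega)
      ((pow_le_pow_left₀ (Nat.cast_nonneg _) hle' 2).trans hAY)
    rw [← Finset.sum_Ico_consecutive _ (show 1 ≤ H by omega) (show H ≤ A by omega)]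
    push_cast
    have := abs_add_le (∑ n ∈ Ico 1 H, sawtooth (Y ^ 3 / (n + α) - β))
      (∑ n ∈ Ico H A, sawtooth (Y ^ 3 / (n + α) - β))
    linarith

lemma one_add_log_le_rpow {Y δ : ℝ} (hY : 1 ≤ Y) (hδ : 0 < δ) :
    1 + Real.log Y ≤ (1 + 1 / δ) * Y ^ δ := by
  have h1 := Real.log_le_rpow_div (x := Y) (by linarith) hδ
  have h2 := Real.one_le_rpow hY hδ.le
  calc 1 + Real.log Y ≤ Y ^ δ + Y ^ δ / δ := add_le_add h2 h1
    _ = _ := by ring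

/-- The sawtooth sum over `n ≤ √y` of `y / (n + α) - β` is `O(y ^ (1/3 + ε))`, uniformly. -/
lemma exists_sum_sawtooth_sqrt_le {ε : ℝ} (hε : 0 < ε) :
    ∃ C : ℝ, 0 < C ∧ ∀ y α β : ℝ, 1 ≤ y → 0 ≤ α → α ≤ 1 →
      |∑ n ∈ Icc 1 ⌊√y⌋₊, sawtooth (y / (n + α) - β)| ≤ C * y ^ ((1 : ℝ) / 3 + ε) := by
  set δ : ℝ := 3 * ε / 2 with hδdef
  have hδ : 0 < δ := by positivity
  refine ⟨6 * 4558 * (1 + 1 / δ) ^ 2, by positivity, fun y α β hy hα hα1 => ?_⟩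
  have hy0 : 0 < y := by linarith
  set Y : ℝ := y ^ ((1 : ℝ) / 3) with hYdef
  have hY : 1 ≤ Y := Real.one_le_rpow hy (by norm_num)
  have hY0 : 0 < Y := by linarith
  have hY3 : Y ^ 3 = y := by
    rw [hYdef, ← Real.rpow_natCast, ← Real.rpow_mul hy0.le]; norm_num
  set A : ℕ := ⌊√y⌋₊ with hA
  have hlogY : 0 ≤ Real.log Y := Real.log_nonneg hY
  have hAle : (A : ℝ) ≤ √y := Nat.floor_le (Real.sqrt_nonneg y)
  have hA1 : 1 ≤ A := Nat.le_floor (by simpa using Real.one_le_sqrt.2 hy)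
  have hA2 : (A : ℝ) ^ 2 ≤ Y ^ 3 := by
    rw [hY3]
    calc (A : ℝ) ^ 2 ≤ √y ^ 2 := by gcongr
      _ = y := Real.sq_sqrt hy0.le
  have hbase := abs_sum_Ico_one_sawtooth_le hY hα hα1 β (Nat.log 2 A + 1) (A + 1)
    (Nat.lt_pow_succ_log_self (by norm_num) A) (by simpa using hA2)
  have hk : ((Nat.log 2 A + 1 : ℕ) : ℝ) ≤ 6 * (1 + Real.log Y) := by
    have h1 := Real.natLog_le_logb A 2
    have hA0 : (0 : ℝ) < A := by positivity
    have hlogA : Real.log A ≤ Real.log y := by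
      gcongr
      have hA1' : (1 : ℝ) ≤ A := by exact_mod_cast hA1
      rw [hY3] at hA2; nlinarith
    have hlogy : Real.log y = 3 * Real.log Y := by rw [← hY3, Real.log_pow]; norm_num
    have h2 : Real.logb (2 : ℕ) A ≤ 6 * Real.log Y := by
      rw [Real.logb, div_le_iff₀ (Real.log_pos (by norm_num))]
      push_cast
      have := Real.log_two_gt_d9
      nlinarith
    push_cast
    linarith
  rw [hY3] at hbase
  have hIcc : Icc 1 A = Ico 1 (A + 1) := rfl
  rw [hIcc]
  calc _ ≤ _ := hbase
    _ ≤ 6 * (1 + Real.log Y) * (4558 * Y * (1 + Real.log Y)) := by gcongr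
    _ = 6 * 4558 * Y * (1 + Real.log Y) ^ 2 := by ring
    _ ≤ 6 * 4558 * Y * ((1 + 1 / δ) * Y ^ δ) ^ 2 := by
      gcongr; exact one_add_log_le_rpow hY hδ
    _ = 6 * 4558 * (1 + 1 / δ) ^ 2 * (Y * (Y ^ δ) ^ 2) := by ring
    _ = _ := by
      congr 1
      rw [← Real.rpow_natCast, ← Real.rpow_mul hY0.le, hYdef, ← Real.rpow_mul hy0.le,
        ← Real.rpow_add hy0, hδdef]
      congr 1; push_cast; ring

/-- Dirichlet's hyperbola method for the points `n (l + α) ≤ y`. -/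
lemma hyperbola_count {y α : ℝ} (hy : 1 ≤ y) (hα : 0 ≤ α) (hα1 : α ≤ 1) {X : ℕ}
    (hX : ⌊y⌋₊ ≤ X) :
    ∃ θ : ℝ, 0 ≤ θ ∧ θ ≤ 1 ∧ ∑ n ∈ Icc 1 X, (⌊y / n - α⌋₊ : ℝ) =
      ∑ n ∈ Icc 1 ⌊√y⌋₊, (⌊y / n - α⌋₊ : ℝ) + ∑ l ∈ Icc 1 ⌊√y⌋₊, (⌊y / (l + α)⌋₊ : ℝ) -
        (⌊√y⌋₊ : ℝ) ^ 2 + θ := by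
  have hy0 : 0 < y := by linarith
  set A : ℕ := ⌊√y⌋₊ with hA
  have hAle : (A : ℝ) ≤ √y := Nat.floor_le (Real.sqrt_nonneg y)
  have hAlt : √y < A + 1 := Nat.lt_floor_add_one _
  have hsq : √y ^ 2 = y := Real.sq_sqrt hy0.le
  have hA1 : 1 ≤ A := Nat.le_floor (by simpa using Real.one_le_sqrt.2 hy)
  have hA1' : (1 : ℝ) ≤ A := by exact_mod_cast hA1
  have hA2 : (A : ℝ) ^ 2 ≤ y := by rw [← hsq]; gcongr
  have hA3 : y < (A + 1 : ℝ) ^ 2 := by rw [← hsq]; gcongr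
  have hAX : A ≤ X := by
    refine le_trans (Nat.le_floor ?_) hX
    nlinarith
  have hfl : ∀ n ∈ Ioc A X, ⌊y / n - α⌋₊ = ∑ l ∈ Icc 1 A, if (n : ℝ) * (l + α) ≤ y then 1 else 0 := by
    intro n hn
    obtain ⟨hn1, hn2⟩ := Finset.mem_Ioc.1 hn
    have hnA : (A : ℝ) + 1 ≤ n := by exact_mod_cast hn1
    have hn0 : (0 : ℝ) < n := by linarith
    rw [← Finset.card_filter]
    have : (Icc 1 A).filter (fun l : ℕ => (n : ℝ) * (l + α) ≤ y) = Icc 1 ⌊y / n - α⌋₊ := by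
      ext l
      simp only [Finset.mem_filter, Finset.mem_Icc]
      have hiff : 1 ≤ l → ((n : ℝ) * (l + α) ≤ y ↔ l ≤ ⌊y / n - α⌋₊) := by
        intro hl
        rw [Nat.le_floor_iff' (by omega), le_sub_iff_add_le, le_div_iff₀ hn0, mul_comm]
      constructor
      · rintro ⟨⟨h1, h2⟩, h3⟩
        exact ⟨h1, (hiff h1).1 h3⟩
      · rintro ⟨h1, h2⟩
        have h3 := (hiff h1).2 h2
        refine ⟨⟨h1, ?_⟩, h3⟩
        by_contra hlt
        push Not at hlt
        have hl : (A : ℝ) + 1 ≤ l := by exact_mod_cast hlt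
        nlinarith
    rw [this]; simp
  have hcol : ∀ l ∈ Icc 1 A, (∑ n ∈ Ioc A X, if (n : ℝ) * (l + α) ≤ y then 1 else 0) =
      ⌊y / (l + α)⌋₊ - A := by
    intro l hl
    have hl1 : (1 : ℝ) ≤ l := by exact_mod_cast (Finset.mem_Icc.1 hl).1
    have hl0 : 0 < (l : ℝ) + α := by linarith
    rw [← Finset.card_filter]
    have : (Ioc A X).filter (fun n : ℕ => (n : ℝ) * (l + α) ≤ y) = Ioc A ⌊y / (l + α)⌋₊ := by
      ext n
      simp only [Finset.mem_filter, Finset.mem_Ioc]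
      have hiff : (n : ℝ) * (l + α) ≤ y ↔ n ≤ ⌊y / (l + α)⌋₊ := by
        rw [Nat.le_floor_iff (by positivity), le_div_iff₀ hl0]
      have hle : ⌊y / (l + α)⌋₊ ≤ X :=
        (Nat.floor_le_floor (div_le_self hy0.le (by linarith))).trans hX
      rw [hiff]
      omega
    rw [this]; simp
  have hnat : ∑ n ∈ Icc 1 X, ⌊y / n - α⌋₊ =
      ∑ n ∈ Icc 1 A, ⌊y / n - α⌋₊ + ∑ l ∈ Icc 1 A, (⌊y / (l + α)⌋₊ - A) := by
    have hun : Icc 1 X = Icc 1 A ∪ Ioc A X := by ext; simp; omega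
    have hdj : Disjoint (Icc 1 A) (Ioc A X) := by
      rw [Finset.disjoint_left]; intro n; simp; omega
    rw [hun, Finset.sum_union hdj, Finset.sum_congr rfl hfl, Finset.sum_comm,
      Finset.sum_congr rfl hcol]
  have herr : ∀ l ∈ Icc 1 A, (0 : ℝ) ≤ ((⌊y / (l + α)⌋₊ - A : ℕ) : ℝ) - (⌊y / (l + α)⌋₊ - A) ∧
      ((⌊y / (l + α)⌋₊ - A : ℕ) : ℝ) - (⌊y / (l + α)⌋₊ - A) ≤ if l = A then 1 else 0 := by
    intro l hl
    obtain ⟨hl1, hlA⟩ := Finset.mem_Icc.1 hl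
    have hl1' : (1 : ℝ) ≤ l := by exact_mod_cast hl1
    have hl0 : 0 < (l : ℝ) + α := by linarith
    rcases hlA.eq_or_lt with rfl | hlt
    · rw [if_pos rfl]
      have h1 : A - 1 ≤ ⌊y / (A + α)⌋₊ := by
        apply Nat.le_floor
        rw [le_div_iff₀ hl0, Nat.cast_sub hl1]
        push_cast
        nlinarith
      rcases le_total A ⌊y / ((A : ℝ) + α)⌋₊ with h | h
      · rw [Nat.cast_sub h]; simp
      · rw [Nat.sub_eq_zero_of_le h]
        have h2 : (A : ℝ) ≤ ⌊y / ((A : ℝ) + α)⌋₊ + 1 := by exact_mod_cast (by omega)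
        have h3 : (⌊y / ((A : ℝ) + α)⌋₊ : ℝ) ≤ A := by exact_mod_cast h
        push_cast
        constructor <;> linarith
    · rw [if_neg hlt.ne]
      have h1 : A ≤ ⌊y / (l + α)⌋₊ := by
        apply Nat.le_floor
        rw [le_div_iff₀ hl0]
        have : (l : ℝ) + 1 ≤ A := by exact_mod_cast hlt
        nlinarith
      rw [Nat.cast_sub h1]; simp
  refine ⟨∑ l ∈ Icc 1 A, (((⌊y / (l + α)⌋₊ - A : ℕ) : ℝ) - (⌊y / (l + α)⌋₊ - A)),
    Finset.sum_nonneg fun l hl => (herr l hl).1, ?_, ?_⟩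
  · refine (Finset.sum_le_sum fun l hl => (herr l hl).2).trans ?_
    rw [Finset.sum_ite_eq']
    split_ifs <;> norm_num
  · have := congrArg (Nat.cast (R := ℝ)) hnat
    push_cast at this
    rw [this, Finset.sum_sub_distrib, Finset.sum_sub_distrib]
    simp
    ring

lemma hasSum_inv_sub_inv_succ {a : ℝ} (ha : 0 < a) :
    HasSum (fun j : ℕ => 1 / (a + j) - 1 / (a + j + 1)) (1 / a) := by
  rw [hasSum_iff_tendsto_nat_of_nonneg]
  · have h : ∀ n : ℕ, ∑ j ∈ range n, (1 / (a + j) - 1 / (a + j + 1)) = 1 / a - 1 / (a + n) := by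
      intro n
      have := Finset.sum_range_sub' (fun j : ℕ => 1 / (a + j)) n
      simpa [add_assoc] using this
    simp_rw [h]
    have : Tendsto (fun n : ℕ => 1 / (a + n)) atTop (nhds 0) :=
      tendsto_const_nhds.div_atTop (tendsto_atTop_add_const_left _ _ tendsto_natCast_atTop_atTop)
    simpa using tendsto_const_nhds.sub this
  · intro j
    rw [sub_nonneg]
    exact one_div_le_one_div_of_le (by positivity) (by linarith)

lemma inv_sub_inv_add_le {a α : ℝ} (ha : 1 < a) (hα : 0 ≤ α) :
    1 / a - 1 / (a + α) ≤ α * (1 / (a - 1) - 1 / a) := by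
  have h0 : 0 < a := by linarith
  have h1 : 0 < a - 1 := by linarith
  have e1 : 1 / a - 1 / (a + α) = α * (1 / (a * (a + α))) := by field_simp; ring
  have e2 : 1 / (a - 1) - 1 / a = 1 / (a * (a - 1)) := by field_simp; ring
  rw [e1, e2]
  gcongr
  linarith

lemma le_inv_sub_inv_add {a α : ℝ} (ha : 0 < a) (hα : 0 ≤ α) (hα1 : α ≤ 1) :
    α * (1 / a - 1 / (a + 1)) ≤ 1 / a - 1 / (a + α) := by
  have e1 : 1 / a - 1 / (a + α) = α * (1 / (a * (a + α))) := by field_simp; ring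
  have e2 : 1 / a - 1 / (a + 1) = 1 / (a * (a + 1)) := by field_simp; ring
  rw [e1, e2]
  gcongr

lemma inv_sub_inv_add_nonneg {a α : ℝ} (ha : 0 < a) (hα : 0 ≤ α) :
    0 ≤ 1 / a - 1 / (a + α) := by
  rw [sub_nonneg]; gcongr; linarith

lemma summable_inv_sub_inv_add {α : ℝ} (hα : 0 ≤ α) :
    Summable fun l : ℕ => 1 / ((l : ℝ) + 1) - 1 / (l + 1 + α) := by
  rw [← summable_nat_add_iff 1]
  refine Summable.of_nonneg_of_le (fun l => inv_sub_inv_add_nonneg (by positivity) hα)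
    (fun l => inv_sub_inv_add_le (by push_cast; linarith [Nat.cast_nonneg (α := ℝ) l]) hα)
    (Summable.mul_left α ?_)
  refine (hasSum_inv_sub_inv_succ one_pos).summable.congr fun l => ?_
  push_cast
  rw [show (l : ℝ) + 1 + 1 - 1 = 1 + l by ring, show (l : ℝ) + 1 + 1 = 1 + l + 1 by ring]

/-- The tail of `∑ (1 / l - 1 / (l + α))` beyond `A` lies between `α / (A + 1)` and `α / A`. -/
lemma tail_inv_sub_inv_add {α : ℝ} (hα : 0 ≤ α) (hα1 : α ≤ 1) {A : ℕ} (hA : 0 < A) :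
    ∃ R : ℝ, α / (A + 1) ≤ R ∧ R ≤ α / A ∧
      ∑' l : ℕ, (1 / ((l : ℝ) + 1) - 1 / (l + 1 + α)) =
        ∑ l ∈ Icc 1 A, (1 / (l : ℝ) - 1 / (l + α)) + R := by
  have hs := summable_inv_sub_inv_add hα
  have hA' : (0 : ℝ) < A := by positivity
  have hsA := (summable_nat_add_iff A).2 hs
  have hlo : α / (A + 1) = ∑' j : ℕ, α * (1 / ((A : ℝ) + 1 + j) - 1 / (A + 1 + j + 1)) := by
    rw [tsum_mul_left, (hasSum_inv_sub_inv_succ (by positivity)).tsum_eq]; ring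
  have hhi : α / A = ∑' j : ℕ, α * (1 / ((A : ℝ) + j) - 1 / (A + j + 1)) := by
    rw [tsum_mul_left, (hasSum_inv_sub_inv_succ hA').tsum_eq]; ring
  refine ⟨∑' l : ℕ, (1 / (((l + A : ℕ) : ℝ) + 1) - 1 / ((l + A : ℕ) + 1 + α)), ?_, ?_, ?_⟩
  · rw [hlo]
    refine Summable.tsum_le_tsum (fun j => ?_)
      ((hasSum_inv_sub_inv_succ (by positivity)).summable.mul_left α) hsA
    have := le_inv_sub_inv_add (a := (A : ℝ) + 1 + j) (by positivity) hα hα1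
    push_cast
    rwa [show (j : ℝ) + A + 1 = A + 1 + j by ring]
  · rw [hhi]
    refine Summable.tsum_le_tsum (fun j => ?_) hsA
      ((hasSum_inv_sub_inv_succ hA').summable.mul_left α)
    have := inv_sub_inv_add_le (a := (A : ℝ) + j + 1) (by
      have : (0 : ℝ) ≤ j := Nat.cast_nonneg j
      linarith) hα
    rw [add_sub_cancel_right] at this
    push_cast
    rwa [show (j : ℝ) + A + 1 = A + j + 1 by ring]
  · rw [← hs.sum_add_tsum_nat_add A]
    congr 1
    have hIcc : Icc 1 A = Ico (0 + 1) (A + 1) := rfl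
    rw [hIcc, ← Finset.sum_Ico_add' (fun l : ℕ => 1 / (l : ℝ) - 1 / (l + α)) 0 A 1,
      Finset.range_eq_Ico]
    push_cast
    rfl

/-- The number of `(n, l)` with `n l ≤ y < n (l + α)`. -/
lemma exists_hyperbola_diff_le {ε : ℝ} (hε : 0 < ε) :
    ∃ C : ℝ, 0 < C ∧ ∀ (y α : ℝ) (X : ℕ), 1 ≤ y → 0 ≤ α → α ≤ 1 → ⌊y⌋₊ ≤ X →
      |∑ n ∈ Icc 1 X, ((⌊y / n⌋₊ : ℝ) - ⌊y / n - α⌋₊) -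
        y * ∑' l : ℕ, (1 / ((l : ℝ) + 1) - 1 / (l + 1 + α))| ≤ C * y ^ ((1 : ℝ) / 3 + ε) := by
  obtain ⟨C, hC, hsaw⟩ := exists_sum_sawtooth_sqrt_le hε
  refine ⟨4 * C + 4, by positivity, fun y α X hy hα hα1 hX => ?_⟩
  have hy0 : 0 < y := by linarith
  have hone : 1 ≤ y ^ ((1 : ℝ) / 3 + ε) := Real.one_le_rpow hy (by positivity)
  obtain ⟨θ, hθ0, hθ1, hθ⟩ := hyperbola_count hy le_rfl zero_le_one hX
  obtain ⟨θ', hθ0', hθ1', hθ'⟩ := hyperbola_count hy hα hα1 hX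
  set A : ℕ := ⌊√y⌋₊ with hA
  have hAle : (A : ℝ) ≤ √y := Nat.floor_le (Real.sqrt_nonneg y)
  have hAlt : √y < A + 1 := Nat.lt_floor_add_one _
  have hsq : √y ^ 2 = y := Real.sq_sqrt hy0.le
  have hA1 : 1 ≤ A := Nat.le_floor (by simpa using Real.one_le_sqrt.2 hy)
  have hA1' : (1 : ℝ) ≤ A := by exact_mod_cast hA1
  have hA2 : (A : ℝ) ^ 2 ≤ y := by rw [← hsq]; gcongr
  have hA3 : y < (A + 1 : ℝ) ^ 2 := by rw [← hsq]; gcongr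
  obtain ⟨R, hR1, hR2, hR⟩ := tail_inv_sub_inv_add hα hα1 hA1
  have hrow : ∀ β : ℝ, 0 ≤ β → β ≤ 1 → ∑ n ∈ Icc 1 A, (⌊y / n - β⌋₊ : ℝ) =
      ∑ n ∈ Icc 1 A, sawtooth (y / (n + 0) - β) + ∑ n ∈ Icc 1 A, (y / n) - A * β - A / 2 := by
    intro β hβ hβ1
    have : ∀ n ∈ Icc 1 A, (⌊y / n - β⌋₊ : ℝ) =
        sawtooth (y / (n + 0) - β) + y / n - β - 1 / 2 := by
      intro n hn
      have hn1 : (1 : ℝ) ≤ n := by exact_mod_cast (Finset.mem_Icc.1 hn).1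
      have hnA : (n : ℝ) ≤ A := by exact_mod_cast (Finset.mem_Icc.1 hn).2
      have h1 : 1 ≤ y / n := by rw [le_div_iff₀ (by positivity)]; nlinarith
      rw [natCast_floor_eq_intCast_floor (by linarith), sawtooth, add_zero]
      ring
    rw [Finset.sum_congr rfl this]
    simp only [Finset.sum_sub_distrib, Finset.sum_add_distrib]
    simp
    ring
  have hcol : ∀ β : ℝ, 0 ≤ β → ∑ l ∈ Icc 1 A, (⌊y / (l + β)⌋₊ : ℝ) =
      ∑ l ∈ Icc 1 A, sawtooth (y / (l + β) - 0) + y * ∑ l ∈ Icc 1 A, 1 / (l + β) - A / 2 := by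
    intro β hβ
    have : ∀ l ∈ Icc 1 A, (⌊y / (l + β)⌋₊ : ℝ) =
        sawtooth (y / (l + β) - 0) + y * (1 / (l + β)) - 1 / 2 := by
      intro l _
      rw [natCast_floor_eq_intCast_floor (by positivity), sawtooth, sub_zero]
      ring
    rw [Finset.sum_congr rfl this]
    simp only [Finset.sum_sub_distrib, Finset.sum_add_distrib, ← Finset.mul_sum]
    simp
    ring
  rw [hrow 0 le_rfl zero_le_one, hcol 0 le_rfl] at hθ
  rw [hrow α hα hα1, hcol α hα] at hθ'
  simp only [sub_zero] at hθ
  rw [Finset.sum_sub_distrib, hθ, hθ', hR, Finset.sum_sub_distrib]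
  have h1 := abs_le.1 (hsaw y 0 0 hy le_rfl zero_le_one)
  have h2 := abs_le.1 (hsaw y 0 α hy le_rfl zero_le_one)
  have h4 := abs_le.1 (hsaw y α 0 hy hα hα1)
  simp only [sub_zero, add_zero] at h1 h2 h4 ⊢
  have hyR1 : A * α - 1 ≤ y * R := by
    have : y * (α / (A + 1)) ≤ y * R := by gcongr
    refine le_trans ?_ this
    rw [← mul_div_assoc, le_div_iff₀ (by positivity)]
    nlinarith
  have hyR2 : y * R ≤ A * α + 3 := by
    have : y * R ≤ y * (α / A) := by gcongr
    refine this.trans ?_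
    rw [← mul_div_assoc, div_le_iff₀ (by positivity)]
    nlinarith
  rw [mul_add, mul_sub, abs_le]
  constructor <;> linarith

lemma tsum_inv_mul_succ_eq {d : ℕ} (hd : 0 < d) :
    ∑' l : ℕ+, 1 / (((d * l : ℕ) : ℝ) * ((d * l : ℕ) + 1)) =
      1 / d * ∑' l : ℕ, (1 / ((l : ℝ) + 1) - 1 / (l + 1 + 1 / d)) := by
  rw [tsum_pnat_eq_tsum_succ (f := fun l : ℕ => 1 / (((d * l : ℕ) : ℝ) * ((d * l : ℕ) + 1))),
    ← tsum_mul_left]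
  refine tsum_congr fun l => ?_
  have hd' : (0 : ℝ) < d := by positivity
  push_cast
  field_simp
  ring

/-- The number of `n ≤ x` for which `d` divides `⌊x / n⌋`. -/
lemma exists_count_dvd_floor_le {ε : ℝ} (hε : 0 < ε) (hε1 : ε ≤ 1) :
    ∃ C : ℝ, 0 < C ∧ ∀ (x : ℝ) (d : ℕ), 1 ≤ x → 0 < d →
      |∑ n ∈ Icc 1 ⌊x⌋₊, (if d ∣ ⌊x / n⌋₊ then (1 : ℝ) else 0) -
        x * ∑' l : ℕ+, 1 / (((d * l : ℕ) : ℝ) * ((d * l : ℕ) + 1))| ≤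
        C * (x / d) ^ ((1 : ℝ) / 3 + ε) := by
  obtain ⟨C, hC, hmain⟩ := exists_hyperbola_diff_le hε
  refine ⟨C + 2, by positivity, fun x d hx hd => ?_⟩
  have hx0 : 0 < x := by linarith
  have hd' : (0 : ℝ) < d := by positivity
  have hd1 : (1 : ℝ) ≤ d := by exact_mod_cast hd
  have hα1 : 1 / (d : ℝ) ≤ 1 := by rw [div_le_one hd']; exact hd1
  have hpow : 0 ≤ (x / d) ^ ((1 : ℝ) / 3 + ε) := by positivity
  have hm1 : ∀ n ∈ Icc 1 ⌊x⌋₊, 1 ≤ ⌊x / n⌋₊ := by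
    intro n hn
    obtain ⟨hn1, hn2⟩ := Finset.mem_Icc.1 hn
    have hn0 : (0 : ℝ) < n := by exact_mod_cast hn1
    rw [Nat.le_floor_iff' one_ne_zero, Nat.cast_one, le_div_iff₀ hn0, one_mul]
    exact (Nat.le_floor_iff hx0.le).1 hn2
  rw [tsum_inv_mul_succ_eq hd, ← mul_assoc, mul_one_div]
  rcases le_or_gt (d : ℝ) x with hdx | hdx
  · have hy : 1 ≤ x / d := by rwa [le_div_iff₀ hd', one_mul]
    have h := hmain (x / d) (1 / d) ⌊x⌋₊ hy (by positivity) hα1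
      (Nat.floor_le_floor (div_le_self hx0.le hd1))
    have hsum : ∑ n ∈ Icc 1 ⌊x⌋₊, (if d ∣ ⌊x / n⌋₊ then (1 : ℝ) else 0) =
        ∑ n ∈ Icc 1 ⌊x⌋₊, ((⌊x / d / n⌋₊ : ℝ) - ⌊x / d / n - 1 / d⌋₊) := by
      refine Finset.sum_congr rfl fun n hn => ?_
      have hm := hm1 n hn
      have e1 : ⌊x / d / n⌋₊ = ⌊x / n⌋₊ / d := by
        rw [div_right_comm, Nat.floor_div_natCast]
      have e2 : ⌊x / d / n - 1 / d⌋₊ = (⌊x / n⌋₊ - 1) / d := by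
        rw [div_right_comm, ← sub_div, Nat.floor_div_natCast, Nat.floor_sub_one]
      have e3 := Nat.succ_div (a := ⌊x / n⌋₊ - 1) (b := d)
      rw [Nat.sub_add_cancel hm] at e3
      rw [e1, e2, e3]
      push_cast
      ring
    rw [hsum]
    refine h.trans ?_
    gcongr
    linarith
  · have hz : ∑ n ∈ Icc 1 ⌊x⌋₊, (if d ∣ ⌊x / n⌋₊ then (1 : ℝ) else 0) = 0 := by
      refine Finset.sum_eq_zero fun n hn => if_neg fun hdvd => ?_
      have hle := Nat.le_of_dvd (hm1 n hn) hdvd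
      have hn1 : (1 : ℝ) ≤ n := by exact_mod_cast (Finset.mem_Icc.1 hn).1
      have : (d : ℝ) ≤ x / n := (Nat.le_floor_iff (by positivity)).1 hle
      have := this.trans (div_le_self hx0.le hn1)
      linarith
    obtain ⟨R, hR1, hR2, hR⟩ := tail_inv_sub_inv_add (α := 1 / (d : ℝ)) (by positivity) hα1 one_pos
    have hR0 : 0 ≤ R := le_trans (by positivity) hR1
    simp only [Icc_self, sum_singleton, Nat.cast_one, div_one] at hR hR2
    have hG0 := inv_sub_inv_add_nonneg (a := 1) (α := 1 / (d : ℝ)) one_pos (by positivity)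
    have hG1 : 1 - 1 / (1 + 1 / (d : ℝ)) ≤ 1 / d := by
      have e : 1 - 1 / (1 + 1 / (d : ℝ)) = (1 / d) / (1 + 1 / d) := by field_simp; ring
      rw [e]
      exact div_le_self (by positivity) (by linarith [show 0 ≤ 1 / (d : ℝ) by positivity])
    rw [div_one] at hG0
    have hxd : x / d ≤ 1 := by rw [div_le_one hd']; exact hdx.le
    have hxd0 : 0 < x / d := by positivity
    rw [hz, hR, zero_sub, abs_neg, abs_of_nonneg (by positivity)]
    have hinv : 1 / (d : ℝ) ≤ x / d := by gcongr
    have hpw : (x / d) ^ (2 : ℝ) ≤ (x / d) ^ ((1 : ℝ) / 3 + ε) :=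
      Real.rpow_le_rpow_of_exponent_ge hxd0 hxd (by linarith)
    rw [Real.rpow_two] at hpw
    calc x / d * (1 - 1 / (1 + 1 / (d : ℝ)) + R) ≤ x / d * (x / d + x / d) := by
          gcongr <;> linarith
      _ = 2 * (x / d) ^ 2 := by ring
      _ ≤ (C + 2) * (x / d) ^ ((1 : ℝ) / 3 + ε) := by
          gcongr
          linarith

lemma summable_pnat_one_div_sq : Summable fun d : ℕ+ => 1 / ((d : ℕ) : ℝ) ^ 2 :=
  summable_pnat_iff_summable_nat.2 (Real.summable_one_div_nat_pow.2 one_lt_two)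

lemma summable_prod_div_mul_succ {k : ℕ → ℝ} {C : ℝ} (hk : ∀ n : ℕ, 1 ≤ n → |k n| ≤ C) :
    Summable fun p : ℕ+ × ℕ+ =>
      k p.1 * (1 / (((p.1 * p.2 : ℕ) : ℝ) * ((p.1 * p.2 : ℕ) + 1))) := by
  have hC : 0 ≤ C := (abs_nonneg _).trans (hk 1 le_rfl)
  refine Summable.of_norm_bounded ((summable_pnat_one_div_sq.mul_of_nonneg
    summable_pnat_one_div_sq (fun _ => by positivity) (fun _ => by positivity)).mul_left C) ?_
  rintro ⟨d, l⟩
  have hd : (0 : ℝ) < (d : ℕ) := by exact_mod_cast d.pos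
  have hl : (0 : ℝ) < (l : ℕ) := by exact_mod_cast l.pos
  rw [Real.norm_eq_abs, abs_mul]
  simp only
  gcongr
  · exact hk d d.pos
  · rw [abs_of_nonneg (by positivity), one_div_mul_one_div]
    push_cast
    refine one_div_le_one_div_of_le (by positivity) ?_
    nlinarith [mul_pos hd hl]

/-- Interchange of the sum over `m` and the sum over the divisors of `m`. -/
lemma tsum_sum_divisors_div {k : ℕ → ℝ} {C : ℝ} (hk : ∀ n : ℕ, 1 ≤ n → |k n| ≤ C) :
    ∑' m : ℕ+, (∑ d ∈ (m : ℕ).divisors, k d) / (((m : ℕ) : ℝ) * ((m : ℕ) + 1)) =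
      ∑' d : ℕ+, k d * ∑' l : ℕ+, 1 / (((d * l : ℕ) : ℝ) * ((d * l : ℕ) + 1)) := by
  have hs := summable_prod_div_mul_succ hk
  simp_rw [← tsum_mul_left]
  rw [← hs.tsum_prod, ← sigmaAntidiagonalEquivProd.tsum_eq]
  have hs' := (sigmaAntidiagonalEquivProd.summable_iff).2 hs
  rw [Summable.tsum_sigma (by exact hs')]
  refine tsum_congr fun m => ?_
  rw [tsum_fintype, ← Nat.sum_divisorsAntidiagonal (fun d _ => k d), Finset.sum_div,
    ← Finset.sum_coe_sort]
  refine Finset.sum_congr rfl fun p _ => ?_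
  have hp := (Nat.mem_divisorsAntidiagonal.1 p.2).1
  change _ = k p.1.1 * (1 / (((p.1.1 * p.1.2 : ℕ) : ℝ) * ((p.1.1 * p.1.2 : ℕ) + 1)))
  rw [hp, mul_one_div]

lemma hasSum_count_dvd_floor (k : ℕ → ℝ) {x : ℝ} (hx : 0 ≤ x) :
    HasSum (fun d : ℕ+ => k d * ∑ n ∈ Icc 1 ⌊x⌋₊, (if (d : ℕ) ∣ ⌊x / n⌋₊ then (1 : ℝ) else 0))
      (∑ n ∈ Icc 1 ⌊x⌋₊, ∑ d ∈ (⌊x / n⌋₊).divisors, k d) := by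
  simp_rw [Finset.mul_sum]
  refine hasSum_sum fun n hn => ?_
  obtain ⟨hn1, hn2⟩ := Finset.mem_Icc.1 hn
  have hm : ⌊x / n⌋₊ ≠ 0 := by
    have hn0 : (0 : ℝ) < n := by exact_mod_cast hn1
    rw [← Nat.one_le_iff_ne_zero, Nat.le_floor_iff' one_ne_zero, Nat.cast_one, le_div_iff₀ hn0,
      one_mul]
    exact (Nat.le_floor_iff hx).1 hn2
  set m := ⌊x / n⌋₊
  set φ : ℕ → ℝ := fun d => if d ∈ m.divisors then k d else 0 with hφ
  have hφs : HasSum φ (∑ d ∈ m.divisors, k d) := by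
    have := hasSum_sum_of_ne_finset_zero (L := .unconditional ℕ) (f := φ) (s := m.divisors)
      (fun d hd => if_neg hd)
    rwa [Finset.sum_congr rfl (fun d hd => (if_pos hd : φ d = k d))] at this
  have hsupp : ∀ d ∉ Set.range ((↑) : ℕ+ → ℕ), φ d = 0 := fun d hd =>
    if_neg fun h => hd ⟨⟨d, Nat.pos_of_mem_divisors h⟩, rfl⟩
  have hpnat := (PNat.coe_injective.hasSum_iff hsupp).2 hφs
  refine HasSum.congr_fun hpnat fun d => ?_
  simp [hφ, Nat.mem_divisors, hm]

/-- The case of small exponents, in terms of `f(n) / n = ∑_{d ∣ n} k(d)`. -/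
lemma isBigO_sum_divisor_sum {ε C : ℝ} (hε : 0 < ε) (hε1 : ε ≤ 1) {k : ℕ → ℝ}
    (hk : ∀ n : ℕ, 1 ≤ n → |k n| ≤ C * (n : ℝ) ^ (ε - 1)) :
    (fun x : ℝ => (∑ n ∈ Icc 1 ⌊x⌋₊, ∑ d ∈ (⌊x / n⌋₊).divisors, k d) -
        x * ∑' m : ℕ+, (∑ d ∈ (m : ℕ).divisors, k d) / (((m : ℕ) : ℝ) * ((m : ℕ) + 1)))
      =O[atTop] fun x : ℝ => x ^ ((1 : ℝ) / 3 + ε) := by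
  have hC : 0 ≤ C := by
    have := (abs_nonneg _).trans (hk 1 le_rfl)
    simpa using this
  have hkC : ∀ n : ℕ, 1 ≤ n → |k n| ≤ C := fun n hn => by
    have hn' : (1 : ℝ) ≤ n := by exact_mod_cast hn
    calc |k n| ≤ C * (n : ℝ) ^ (ε - 1) := hk n hn
      _ ≤ C * 1 := by
        gcongr
        exact Real.rpow_le_one_of_one_le_of_nonpos hn' (by linarith)
      _ = C := mul_one C
  obtain ⟨K, hK, hcount⟩ := exists_count_dvd_floor_le hε hε1
  have hsG : Summable fun d : ℕ+ =>
      k d * ∑' l : ℕ+, 1 / (((d * l : ℕ) : ℝ) * ((d * l : ℕ) + 1)) := by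
    simp_rw [← tsum_mul_left]
    exact (summable_prod_div_mul_succ hkC).prod
  have hs43 : Summable fun d : ℕ+ => ((d : ℕ) : ℝ) ^ (-(4 / 3) : ℝ) :=
    (summable_pnat_iff_summable_nat (f := fun d : ℕ => (d : ℝ) ^ (-(4 / 3) : ℝ))).2
      (Real.summable_nat_rpow.2 (by norm_num))
  refine Asymptotics.IsBigO.of_bound (C * K * ∑' d : ℕ+, ((d : ℕ) : ℝ) ^ (-(4 / 3) : ℝ)) ?_
  filter_upwards [eventually_ge_atTop (1 : ℝ)] with x hx
  have hx0 : 0 < x := by linarith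
  have hd := (hasSum_count_dvd_floor k hx0.le).sub (hsG.hasSum.mul_left x)
  rw [tsum_sum_divisors_div hkC, ← hd.tsum_eq, Real.norm_of_nonneg (by positivity : 0 ≤ x ^ ((1 : ℝ) / 3 + ε))]
  refine tsum_of_norm_bounded (g := fun d : ℕ+ => C * K * ((d : ℕ) : ℝ) ^ (-(4 / 3) : ℝ) *
    x ^ ((1 : ℝ) / 3 + ε)) ((hs43.hasSum.mul_left _).mul_right _) fun d => ?_
  have hd0 : (0 : ℝ) < (d : ℕ) := by exact_mod_cast d.pos
  rw [mul_left_comm x, ← mul_sub, Real.norm_eq_abs, abs_mul]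
  calc _ ≤ C * ((d : ℕ) : ℝ) ^ (ε - 1) * (K * (x / (d : ℕ)) ^ ((1 : ℝ) / 3 + ε)) := by
        gcongr
        · exact hk d d.pos
        · exact hcount x d hx d.pos
    _ = C * K * (((d : ℕ) : ℝ) ^ (ε - 1) / ((d : ℕ) : ℝ) ^ ((1 : ℝ) / 3 + ε)) *
          x ^ ((1 : ℝ) / 3 + ε) := by
        rw [Real.div_rpow hx0.le hd0.le]; ring
    _ = _ := by
        rw [← Real.rpow_sub hd0]
        congr 3
        ring

/-- The case of large exponents, where every term is estimated trivially. -/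
lemma isBigO_sum_floor_of_le_rpow {ε C : ℝ} (hε : 1 ≤ ε) {h : ℕ → ℝ}
    (hh : ∀ n : ℕ, 1 ≤ n → |h n| ≤ C * (n : ℝ) ^ ε) :
    (fun x : ℝ => ∑ n ∈ Icc 1 ⌊x⌋₊, h ⌊x / n⌋₊) =O[atTop] fun x : ℝ => x ^ ((1 : ℝ) / 3 + ε) := by
  have hC : 0 ≤ C := by
    have := (abs_nonneg _).trans (hh 1 le_rfl)
    simpa using this
  have hs : Summable fun n : ℕ => (n : ℝ) ^ (-((1 : ℝ) / 3 + ε)) :=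
    Real.summable_nat_rpow.2 (by linarith)
  refine Asymptotics.IsBigO.of_bound (C * ∑' n : ℕ, (n : ℝ) ^ (-((1 : ℝ) / 3 + ε))) ?_
  filter_upwards [eventually_ge_atTop (1 : ℝ)] with x hx
  have hx0 : 0 < x := by linarith
  rw [Real.norm_of_nonneg (by positivity : 0 ≤ x ^ ((1 : ℝ) / 3 + ε)), Real.norm_eq_abs]
  calc _ ≤ ∑ n ∈ Icc 1 ⌊x⌋₊, |h ⌊x / n⌋₊| := abs_sum_le_sum_abs _ _
    _ ≤ ∑ n ∈ Icc 1 ⌊x⌋₊, C * x ^ ((1 : ℝ) / 3 + ε) * (n : ℝ) ^ (-((1 : ℝ) / 3 + ε)) := by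
        refine Finset.sum_le_sum fun n hn => ?_
        obtain ⟨hn1, hn2⟩ := Finset.mem_Icc.1 hn
        have hn0 : (0 : ℝ) < n := by exact_mod_cast hn1
        have hxn : 1 ≤ x / n := by
          rw [le_div_iff₀ hn0, one_mul]
          exact (Nat.le_floor_iff hx0.le).1 hn2
        have hm : 1 ≤ ⌊x / n⌋₊ := Nat.le_floor (by simpa using hxn)
        calc |h ⌊x / n⌋₊| ≤ C * (⌊x / n⌋₊ : ℝ) ^ ε := hh _ hm
          _ ≤ C * (x / n) ^ ε := by
            gcongr
            exact Nat.floor_le (by positivity)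
          _ ≤ C * (x / n) ^ ((1 : ℝ) / 3 + ε) := by
            gcongr
            linarith
          _ = _ := by rw [Real.div_rpow hx0.le hn0.le, Real.rpow_neg hn0.le]; ring
    _ = C * x ^ ((1 : ℝ) / 3 + ε) * ∑ n ∈ Icc 1 ⌊x⌋₊, (n : ℝ) ^ (-((1 : ℝ) / 3 + ε)) := by
        rw [Finset.mul_sum]
    _ ≤ C * x ^ ((1 : ℝ) / 3 + ε) * ∑' n : ℕ, (n : ℝ) ^ (-((1 : ℝ) / 3 + ε)) := by
        gcongr
        exact hs.sum_le_tsum _ fun n _ => by positivity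
    _ = _ := by ring

/-- If `f = id ∗ g` with `g(n) = O_ε(n^ε)`, then
`∑_{n ≤ x} f(⌊x/n⌋)/⌊x/n⌋ = x ∑_{m ≥ 1} f(m)/(m²(m+1)) + O(x^{1/3+ε})`. -/
theorem sum_f_floor_div_asymptotic_eps (ε : ℝ) (hε : 0 < ε) (f g : ℕ → ℝ)
    (hf : ∀ n : ℕ, 1 ≤ n → f n = ∑ d ∈ n.divisors, (d : ℝ) * g (n / d))
    (hg : ∃ C : ℝ, ∀ n : ℕ, 1 ≤ n → |g n| ≤ C * (n : ℝ) ^ ε) :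
    (fun x : ℝ =>
        (∑ n ∈ Finset.Icc 1 ⌊x⌋₊, f ⌊x / (n : ℝ)⌋₊ / (⌊x / (n : ℝ)⌋₊ : ℝ)) -
        x * ∑' m : ℕ, f m / (m ^ 2 * (m + 1)))
    =O[atTop] fun x : ℝ => x ^ ((1 : ℝ) / 3 + ε) := by
  obtain ⟨C, hg⟩ := hg
  have hC : 0 ≤ C := by
    have := (abs_nonneg _).trans (hg 1 le_rfl)
    simpa using this
  set k : ℕ → ℝ := fun d => g d / d with hkdef
  have hk : ∀ n : ℕ, 1 ≤ n → |k n| ≤ C * (n : ℝ) ^ (ε - 1) := by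
    intro n hn
    have hn0 : (0 : ℝ) < n := by exact_mod_cast hn
    rw [hkdef, abs_div, abs_of_pos hn0, Real.rpow_sub_one hn0.ne', ← mul_div_assoc]
    gcongr
    exact hg n hn
  have hfk : ∀ m : ℕ, f m / m = ∑ d ∈ m.divisors, k d := by
    intro m
    rcases Nat.eq_zero_or_pos m with rfl | hm
    · simp
    have hm0 : (0 : ℝ) < m := by exact_mod_cast hm
    rw [hf m hm, ← Nat.sum_div_divisors m k, Finset.sum_div]
    refine Finset.sum_congr rfl fun d hd => ?_
    have hdvd := Nat.dvd_of_mem_divisors hd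
    have hd0 : (d : ℝ) ≠ 0 := by exact_mod_cast (Nat.pos_of_mem_divisors hd).ne'
    rw [hkdef]
    simp only
    rw [Nat.cast_div hdvd hd0]
    field_simp
  rcases le_or_gt ε 1 with hε1 | hε1
  · have hser : ∑' m : ℕ, f m / ((m : ℝ) ^ 2 * (m + 1)) =
        ∑' m : ℕ+, (∑ d ∈ (m : ℕ).divisors, k d) / (((m : ℕ) : ℝ) * ((m : ℕ) + 1)) := by
      rw [← tsum_pnat_eq_tsum_of_eq_zero (f := fun m : ℕ => f m / ((m : ℝ) ^ 2 * (m + 1)))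
        (by simp)]
      refine tsum_congr fun m => ?_
      rw [← hfk, div_div]
      ring_nf
    simp_rw [hser, hfk]
    exact isBigO_sum_divisor_sum hε hε1 hk
  · refine (isBigO_sum_floor_of_le_rpow (C := C) hε1.le (h := fun m => f m / m) ?_).sub ?_
    · intro m hm
      have hm0 : (0 : ℝ) < m := by exact_mod_cast hm
      rw [hfk]
      calc _ ≤ ∑ d ∈ m.divisors, |k d| := abs_sum_le_sum_abs _ _
        _ ≤ ∑ d ∈ m.divisors, C * (m : ℝ) ^ (ε - 1) := by
            refine Finset.sum_le_sum fun d hd => (hk d (Nat.pos_of_mem_divisors hd)).trans ?_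
            have : (d : ℝ) ≤ m := by exact_mod_cast Nat.divisor_le hd
            gcongr
        _ = m.divisors.card * (C * (m : ℝ) ^ (ε - 1)) := by simp
        _ ≤ m * (C * (m : ℝ) ^ (ε - 1)) := by
            gcongr
            exact Nat.card_divisors_le_self m
        _ = C * (m : ℝ) ^ ε := by
            rw [Real.rpow_sub_one hm0.ne']; field_simp
    · refine Asymptotics.IsBigO.of_bound |∑' m : ℕ, f m / ((m : ℝ) ^ 2 * (m + 1))| ?_
      filter_upwards [eventually_ge_atTop (1 : ℝ)] with x hx
      rw [Real.norm_eq_abs, abs_mul, mul_comm, abs_of_nonneg (by linarith : 0 ≤ x),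
        Real.norm_of_nonneg (by positivity)]
      gcongr
      calc x = x ^ (1 : ℝ) := (Real.rpow_one x).symm
        _ ≤ _ := Real.rpow_le_rpow_of_exponent_le hx (by linarith)
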